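/- arXiv:1202.2269 — 3 statements merged into one kernel-verified Lean document; each statement's English description precedes it below -/
import Mathlib

section
/- Let X be a rack and A an associative (not necessarily commutative) ring, regarded as a trivial X-module. For all p₁, p₂ ≥ 0 and all f₁ : X^{p₁} → A, f₂ : X^{p₂} → A, one has d_R^{p₁+p₂+1}(f₁ ≻ f₂) = (d_R^{p₁+1} f₁) ≻ f₂ + (−1)^{p₁} f₁ ≻ (d_R^{p₂+1} f₂) as functions X^{p₁+p₂+1} → A. -/
/-- The set of `(p,q)`-shuffles: permutations increasing on the first `p`
and on the last `q` (0-indexed) positions. -/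
def Sh (p q : ℕ) : Finset (Equiv.Perm (Fin (p + q))) :=
  Finset.univ.filter fun σ =>
    (∀ i j : Fin (p + q), (i : ℕ) < (j : ℕ) → (j : ℕ) < p → σ i < σ j) ∧
    (∀ i j : Fin (p + q), (i : ℕ) < (j : ℕ) → p ≤ (i : ℕ) → σ i < σ j)

/-- The `(p,q)`-shuffles with `σ(p) = p + q` (1-indexed). -/
def ShL (p q : ℕ) : Finset (Equiv.Perm (Fin (p + q))) :=
  (Sh p q).filter fun σ => ∀ i : Fin (p + q), (i : ℕ) + 1 = p → (σ i : ℕ) + 1 = p + q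

/-- The `(p,q)`-shuffles with `σ(p+q) = p + q` (1-indexed). -/
def ShT (p q : ℕ) : Finset (Equiv.Perm (Fin (p + q))) :=
  (Sh p q).filter fun σ => ∀ i : Fin (p + q), (i : ℕ) + 1 = p + q → (σ i : ℕ) + 1 = p + q

/-- `y k = x_{i₁} ▷ (x_{i₂} ▷ (⋯ ▷ (x_{i_j} ▷ x_{σ(k)})⋯))`, where `i₁ < ⋯ < i_j`
are the elements of `{σ(p+1),…,σ(p+q)}` (1-indexed) smaller than `σ(k)`. -/
def yVal {X : Type*} (op : X → X → X) (p q : ℕ) (σ : Equiv.Perm (Fin (p + q)))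
    (x : Fin (p + q) → X) (k : Fin p) : X :=
  ((Finset.univ.filter fun i : Fin (p + q) =>
      p ≤ ((σ.symm i : Fin (p + q)) : ℕ) ∧
        i < σ ⟨k, Nat.lt_of_lt_of_le k.isLt (Nat.le_add_right p q)⟩).sort (· ≤ ·)).foldr
    (fun i acc => op (x i) acc)
    (x (σ ⟨k, Nat.lt_of_lt_of_le k.isLt (Nat.le_add_right p q)⟩))

/-- The dendriform product `≻` on rack cochains. -/
def succP {X A : Type*} [Ring A] (op : X → X → X) (p q : ℕ)
    (f₁ : (Fin p → X) → A) (f₂ : (Fin q → X) → A) : (Fin (p + q) → X) → A :=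
  fun x => ∑ σ ∈ ShT p q, (Equiv.Perm.sign σ : ℤ) •
    (f₁ (fun k => yVal op p q σ x k) *
     f₂ (fun k => x (σ ⟨p + (k : ℕ), Nat.add_lt_add_left k.isLt p⟩)))

/-- The dendriform product `≺` on rack cochains. -/
def precP {X A : Type*} [Ring A] (op : X → X → X) (p q : ℕ)
    (f₁ : (Fin p → X) → A) (f₂ : (Fin q → X) → A) : (Fin (p + q) → X) → A :=
  fun x => ∑ σ ∈ ShL p q, (Equiv.Perm.sign σ : ℤ) •
    (f₁ (fun k => yVal op p q σ x k) *
     f₂ (fun k => x (σ ⟨p + (k : ℕ), Nat.add_lt_add_left k.isLt p⟩)))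

/-- The cubical face maps on tuples: for `ε = false` (i.e. ε = 0),
`(x₁,…,x_{n+1}) ↦ (x₁,…,x_{j-1}, x_j ▷ x_{j+1}, …, x_j ▷ x_{n+1})`
and for `ε = true` (i.e. ε = 1), `(x₁,…,x_{n+1}) ↦ (x₁,…,x_{j-1}, x_{j+1},…,x_{n+1})`
(`j` is 0-indexed here). -/
def rackFace {X : Type*} (op : X → X → X) (ε : Bool) {n : ℕ} (j : Fin (n + 1))
    (x : Fin (n + 1) → X) : Fin n → X :=
  fun k => if (k : ℕ) < (j : ℕ) then x k.castSucc
    else if ε then x k.succ else op (x j) (x k.succ)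

/-- The rack differential with trivial coefficients:
`d_R f (x) = Σ_{i=1}^{n+1} (−1)^i [ f(d_{i,0} x) − f(d_{i,1} x) ]`. -/
def rackDiff {X A : Type*} [AddCommGroup A] (op : X → X → X) {n : ℕ}
    (f : (Fin n → X) → A) : (Fin (n + 1) → X) → A :=
  fun x => ∑ j : Fin (n + 1),
    (-1 : ℤ) ^ ((j : ℕ) + 1) • (f (rackFace op false j x) - f (rackFace op true j x))

section Aux
variable {X A : Type*} [Ring A]

/-- Rack differential on functions of lists. -/
def LD (op : X → X → X) : List X → (List X → A) → A
  | [], _ => 0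
  | x :: l, F => F l - F (l.map (op x)) - LD op l (fun m => F (x :: m))

/-- Recursive shuffle product on functions of lists. -/
def LR (op : X → X → X) : List X → ℕ → (List X → A) → (List X → A) → A
  | [], 0, F, G => F [] * G []
  | [], _ + 1, _, _ => 0
  | x :: l, 0, F, G => LR op l 0 (fun m => F (m.map (op x))) (fun m => G (x :: m))
  | x :: l, p + 1, F, G => if p + 1 ≤ l.length then
      LR op l p (fun m => F (x :: m)) G +
        (-1 : ℤ) ^ (p + 1) • LR op l (p + 1) (fun m => F (m.map (op x))) (fun m => G (x :: m))
      else 0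

lemma LD_congr (op : X → X → X) (l : List X) (F F' : List X → A)
    (h : ∀ m : List X, m.length + 1 = l.length → F m = F' m) : LD op l F = LD op l F' := by
  induction l generalizing F F' with
  | nil => rfl
  | cons x l ih =>
    simp only [LD]
    rw [h l (by simp), h (l.map (op x)) (by simp), ih _ (fun m => F' (x :: m))]
    intro m hm
    exact h _ (by simp [hm])

lemma LD_add (op : X → X → X) (l : List X) (F F' : List X → A) :
    LD op l (fun m => F m + F' m) = LD op l F + LD op l F' := by
  induction l generalizing F F' with
  | nil => simp [LD]
  | cons x l ih => simp only [LD, ih]; abel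

lemma LD_smul (op : X → X → X) (l : List X) (z : ℤ) (F : List X → A) :
    LD op l (fun m => z • F m) = z • LD op l F := by
  induction l generalizing F with
  | nil => simp [LD]
  | cons x l ih => simp only [LD, ih, smul_sub]

lemma LD_map (op : X → X → X)
    (hself : ∀ x y z : X, op x (op y z) = op (op x y) (op x z)) (a : X)
    (l : List X) (F : List X → A) :
    LD op (l.map (op a)) F = LD op l (fun m => F (m.map (op a))) := by
  induction l generalizing F with
  | nil => simp [LD]
  | cons x l ih =>
    simp only [LD, ih, List.map_cons, List.map_map]
    congr 4
    funext b
    exact (hself a x b).symm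

lemma LR_sub_left (op : X → X → X) (l : List X) (p : ℕ) (F F' G : List X → A) :
    LR op l p (fun m => F m - F' m) G = LR op l p F G - LR op l p F' G := by
  induction l generalizing p F F' G with
  | nil => cases p <;> simp [LR, sub_mul]
  | cons x l ih =>
    cases p with
    | zero => simp only [LR, ih]
    | succ p =>
      simp only [LR, ih]
      split_ifs
      · rw [smul_sub]; abel
      · simp

lemma LR_sub_right (op : X → X → X) (l : List X) (p : ℕ) (F G G' : List X → A) :
    LR op l p F (fun m => G m - G' m) = LR op l p F G - LR op l p F G' := by
  induction l generalizing p F G G' with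
  | nil => cases p <;> simp [LR, mul_sub]
  | cons x l ih =>
    cases p with
    | zero => simp only [LR, ih]
    | succ p =>
      simp only [LR, ih]
      split_ifs
      · rw [smul_sub]; abel
      · simp

lemma LR_map (op : X → X → X)
    (hself : ∀ x y z : X, op x (op y z) = op (op x y) (op x z)) (a : X)
    (l : List X) (p : ℕ) (F G : List X → A) :
    LR op (l.map (op a)) p F G =
      LR op l p (fun m => F (m.map (op a))) (fun m => G (m.map (op a))) := by
  have key : ∀ (x : X) (m : List X), (m.map (op a)).map (op (op a x)) =
      (m.map (op x)).map (op a) := by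
    intro x m
    simp only [List.map_map]
    apply List.map_congr_left
    intro b _
    exact (hself a x b).symm
  induction l generalizing p F G with
  | nil => cases p <;> simp [LR]
  | cons x l ih =>
    cases p with
    | zero => simp only [LR, ih, List.map_cons, key]
    | succ p => simp only [LR, ih, List.map_cons, key, List.length_map]

lemma LR_congr (op : X → X → X) (l : List X) (p q : ℕ) (F F' G G' : List X → A)
    (hl : l.length = p + q) (hF : ∀ m : List X, m.length = p → F m = F' m)
    (hG : ∀ m : List X, m.length = q → G m = G' m) :
    LR op l p F G = LR op l p F' G' := by
  induction l generalizing p q F F' G G' with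
  | nil =>
    obtain ⟨rfl, rfl⟩ : p = 0 ∧ q = 0 := by simp at hl; omega
    simp [LR, hF, hG]
  | cons x l ih =>
    simp only [List.length_cons] at hl
    cases p with
    | zero =>
      simp only [LR]
      obtain ⟨q, rfl⟩ : ∃ r, q = r + 1 := ⟨q - 1, by omega⟩
      exact ih 0 q _ _ _ _ (by omega) (fun m hm => hF _ (by simpa using hm))
        (fun m hm => hG _ (by simpa using hm))
    | succ p =>
      simp only [LR]
      split_ifs with h
      · obtain ⟨q, rfl⟩ : ∃ r, q = r + 1 := ⟨q - 1, by omega⟩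
        rw [ih p (q + 1) _ (fun m => F' (x :: m)) G G' (by omega)
            (fun m hm => hF _ (by simpa using hm)) hG,
          ih (p + 1) q _ (fun m => F' (m.map (op x))) _ (fun m => G' (x :: m)) (by omega)
            (fun m hm => hF _ (by simpa using hm)) (fun m hm => hG _ (by simpa using hm))]
      · rfl

lemma LR_zero_right (op : X → X → X) (l : List X) (p : ℕ) (F : List X → A) :
    LR op l p F (fun _ => 0) = 0 := by
  have := LR_sub_right op l p F (fun _ => (0 : A)) (fun _ => 0)
  simpa using this

lemma LR_zero_left (op : X → X → X) (l : List X) (p : ℕ) (G : List X → A) :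
    LR op l p (fun _ => 0) G = 0 := by
  have := LR_sub_left op l p (fun _ => (0 : A)) (fun _ => 0) G
  simpa using this

lemma LR_big (op : X → X → X) (l : List X) (p : ℕ) (F G : List X → A)
    (h : l.length ≤ p) (hp : 1 ≤ p) : LR op l p F G = 0 := by
  obtain ⟨p, rfl⟩ : ∃ r, p = r + 1 := ⟨p - 1, by omega⟩
  cases l with
  | nil => rfl
  | cons x l =>
    simp only [LR]
    rw [if_neg]
    simp at h; omega

lemma LD_single (op : X → X → X) (m : List X) (hm : m.length = 1) (F : List X → A) :
    LD op m F = 0 := by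
  obtain ⟨a, rfl⟩ := List.length_eq_one_iff.1 hm
  simp [LD]

lemma LD_LR (op : X → X → X)
    (hself : ∀ x y z : X, op x (op y z) = op (op x y) (op x z))
    (l : List X) (p : ℕ) (F G : List X → A) :
    LD op l (fun m => LR op m p F G) = LR op l (p + 1) (fun m => LD op m F) G +
      (-1 : ℤ) ^ p • LR op l p F (fun m => LD op m G) := by
  induction l generalizing p F G with
  | nil => cases p <;> simp [LD, LR]
  | cons x l ih =>
    rcases lt_or_ge p l.length with hp | hp
    · cases p with
      | zero =>
        have h1 : 0 + 1 ≤ l.length := hp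
        simp only [LD, LR, ih, LR_map op hself, LR_sub_left, LR_sub_right, if_pos h1,
          LD_map op hself]
        have hz : LR op l 0 (fun m => LD op m fun m => F (x :: m)) G = 0 := by
          rw [LR_congr op l 0 l.length _ (fun _ => 0) G G (by simp) _ (fun _ _ => rfl)]
          · exact LR_zero_left op l 0 G
          · intro m hm
            obtain rfl : m = [] := by simpa using hm
            rfl
        simp [hz]
        abel
      | succ p =>
        have e : LD op l (fun m => LR op (x :: m) (p + 1) F G) =
            LD op l (fun m => LR op m p (fun m => F (x :: m)) G +
        (-1 : ℤ) ^ (p + 1) • LR op m (p + 1) (fun m => F (m.map (op x))) (fun m => G (x :: m))) := by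
          apply LD_congr
          intro m hm
          simp only [LR]
          rw [if_pos (by omega)]
        have h1 : p + 1 + 1 ≤ l.length := hp
        have h2 : p + 1 ≤ l.length := by omega
        simp only [LD, e, LD_add, LD_smul]
        simp only [LD, LR, ih, LR_map op hself, LR_sub_left, LR_sub_right, if_pos h1, if_pos h2,
          LD_map op hself]
        rcases neg_one_pow_eq_or ℤ p with h | h <;> simp only [pow_succ, h] <;> simp <;> abel
    · rw [LR_big op (x :: l) (p + 1) _ _ (by simpa using hp) (by omega)]
      rcases hp.eq_or_lt with h | h
      · rw [LR_congr op (x :: l) p 1 F F (fun m => LD op m G) (fun _ => 0) (by simp [h])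
          (fun _ _ => rfl) (fun m hm => LD_single op m hm G), LR_zero_right]
        cases p with
        | zero =>
          obtain rfl : l = [] := by simpa using h
          simp [LD]
        | succ p =>
          rw [LD_congr op _ _ (fun _ => 0)]
          · have := LD_smul op (x :: l) 0 (fun _ => (0 : A))
            simpa using this
          · intro m hm
            exact LR_big _ _ _ _ _ (by simp at hm; omega) (by omega)
      · rw [LR_big op (x :: l) p _ _ (by simpa using h) (by omega)]
        rw [LD_congr op _ _ (fun _ => 0)]
        · have := LD_smul op (x :: l) 0 (fun _ => (0 : A))
          simpa using this
        · intro m hm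
          exact LR_big _ _ _ _ _ (by simp at hm; omega) (by omega)

/-- Permutation sending `c` to `0` and inducing `e` on the rest. -/
def MP {n : ℕ} (c : Fin (n + 1)) (e : Equiv.Perm (Fin n)) : Equiv.Perm (Fin (n + 1)) :=
  Equiv.Perm.decomposeFin.symm (0, e) * Fin.cycleRange c

lemma MP_self {n : ℕ} (c : Fin (n + 1)) (e : Equiv.Perm (Fin n)) : MP c e c = 0 := by
  simp [MP]

lemma MP_succAbove {n : ℕ} (c : Fin (n + 1)) (e : Equiv.Perm (Fin n)) (j : Fin n) :
    MP c e (c.succAbove j) = (e j).succ := by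
  simp [MP, Fin.cycleRange_succAbove]

lemma MP_symm_zero {n : ℕ} (c : Fin (n + 1)) (e : Equiv.Perm (Fin n)) : (MP c e).symm 0 = c := by
  rw [Equiv.symm_apply_eq, MP_self]

lemma MP_symm_succ {n : ℕ} (c : Fin (n + 1)) (e : Equiv.Perm (Fin n)) (j : Fin n) :
    (MP c e).symm j.succ = c.succAbove (e.symm j) := by
  rw [Equiv.symm_apply_eq, MP_succAbove]; simp

lemma MP_sign {n : ℕ} (c : Fin (n + 1)) (e : Equiv.Perm (Fin n)) :
    Equiv.Perm.sign (MP c e) = (-1) ^ (c : ℕ) * Equiv.Perm.sign e := by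
  simp [MP, Fin.sign_cycleRange, mul_comm]

lemma MP_lt {n : ℕ} (c : Fin (n + 1)) (e : Equiv.Perm (Fin n)) (j : ℕ) (hj : j < n)
    (hc : j < (c : ℕ)) : MP c e ⟨j, by omega⟩ = (e ⟨j, hj⟩).succ := by
  rw [← MP_succAbove c e ⟨j, hj⟩, Fin.succAbove_of_castSucc_lt]
  · rfl
  · exact hc

lemma MP_ge {n : ℕ} (c : Fin (n + 1)) (e : Equiv.Perm (Fin n)) (j : ℕ) (hj : j < n)
    (hc : (c : ℕ) ≤ j) : MP c e ⟨j + 1, by omega⟩ = (e ⟨j, hj⟩).succ := by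
  rw [← MP_succAbove c e ⟨j, hj⟩, Fin.succAbove_of_le_castSucc]
  · rfl
  · exact hc

lemma MP_bij (n : ℕ) : Function.Bijective
    (fun a : Fin (n + 1) × Equiv.Perm (Fin n) => MP a.1 a.2) := by
  rw [Fintype.bijective_iff_injective_and_card]
  constructor
  · rintro ⟨c, e⟩ ⟨c', e'⟩ h
    simp only at h
    have hc : c = c' := by
      rw [← MP_symm_zero c e, h, MP_symm_zero]
    subst hc
    congr 1
    ext j
    have := MP_succAbove c e j
    rw [h, MP_succAbove] at this
    rw [Fin.succ_injective _ this]
  · simp [Fintype.card_perm, Nat.factorial_succ]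

/-- Shuffle predicate. -/
def SP (p n : ℕ) (σ : Equiv.Perm (Fin n)) : Prop :=
  (∀ i j : Fin n, (i : ℕ) < (j : ℕ) → (j : ℕ) < p → σ i < σ j) ∧
  (∀ i j : Fin n, (i : ℕ) < (j : ℕ) → p ≤ (i : ℕ) → σ i < σ j) ∧
  (∀ i : Fin n, (i : ℕ) + 1 = n → p ≤ (i : ℕ) ∧ (σ i : ℕ) + 1 = n)

/-- The twisted value at position `k`. -/
def yL (op : X → X → X) (p n : ℕ) (σ : Equiv.Perm (Fin n)) (x : Fin n → X) (k : Fin n) : X :=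
  ((List.finRange n).filter (fun i => p ≤ ((σ.symm i : Fin n) : ℕ) ∧ i < σ k)).foldr
    (fun i acc => op (x i) acc) (x (σ k))

/-- The term of a shuffle. -/
def STm (op : X → X → X) (p q n : ℕ) (h : n = p + q) (σ : Equiv.Perm (Fin n))
    (x : Fin n → X) (F G : List X → A) : A :=
  F (List.ofFn fun k : Fin p => yL op p n σ x ⟨k, by omega⟩) *
    G (List.ofFn fun k : Fin q => x (σ ⟨p + k, by omega⟩))

open Classical in
/-- Sum over shuffles. -/
noncomputable def SS (op : X → X → X) (p q n : ℕ) (h : n = p + q)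
    (x : Fin n → X) (F G : List X → A) : A :=
  ∑ σ : Equiv.Perm (Fin n), if SP p n σ then
    (Equiv.Perm.sign σ : ℤ) • STm op p q n h σ x F G else 0

lemma SP_A (p n : ℕ) (hp : p + 1 ≤ n) (e : Equiv.Perm (Fin n)) :
    SP (p + 1) (n + 1) (MP 0 e) ↔ SP p n e := by
  have h0 : MP 0 e 0 = 0 := MP_self 0 e
  have hs : ∀ j : Fin n, MP 0 e j.succ = (e j).succ := fun j => by
    simpa using MP_succAbove 0 e j
  constructor
  · rintro ⟨h1, h2, h3⟩
    refine ⟨fun i j hij hj => ?_, fun i j hij hj => ?_, fun i hi => ?_⟩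
    · have := h1 i.succ j.succ (by simpa using hij) (by simpa using hj)
      simpa [hs] using this
    · have := h2 i.succ j.succ (by simpa using hij) (by simpa using hj)
      simpa [hs] using this
    · have := h3 i.succ (by simpa using hi)
      simpa [hs] using this
  · rintro ⟨h1, h2, h3⟩
    refine ⟨fun i j => ?_, fun i j => ?_, fun i => ?_⟩
    · refine Fin.cases ?_ (fun i => ?_) i <;> refine Fin.cases ?_ (fun j => ?_) j
      · simp
      · simp [h0, hs]
      · simp
      · simpa [hs] using h1 i j
    · refine Fin.cases ?_ (fun i => ?_) i <;> refine Fin.cases ?_ (fun j => ?_) j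
      · simp
      · simp
      · simp
      · simpa [hs] using h2 i j
    · refine Fin.cases ?_ (fun i => ?_) i
      · simp; omega
      · simpa [hs] using h3 i

lemma SP_B (p n : ℕ) (hp : p ≤ n) (e : Equiv.Perm (Fin n)) :
    SP p (n + 1) (MP ⟨p, by omega⟩ e) ↔ SP p n e := by
  have h0 : MP ⟨p, by omega⟩ e ⟨p, by omega⟩ = 0 := MP_self _ e
  have hlt : ∀ (j : ℕ) (hj : j < n), j < p →
      MP ⟨p, by omega⟩ e ⟨j, by omega⟩ = (e ⟨j, hj⟩).succ := fun j hj h => MP_lt _ e j hj h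
  have hge : ∀ (j : ℕ) (hj : j < n), p ≤ j →
      MP ⟨p, by omega⟩ e ⟨j + 1, by omega⟩ = (e ⟨j, hj⟩).succ := fun j hj h => MP_ge _ e j hj h
  constructor
  · rintro ⟨h1, h2, h3⟩
    refine ⟨fun ⟨i, hi⟩ ⟨j, hj⟩ hij hjp => ?_, fun ⟨i, hi⟩ ⟨j, hj⟩ hij hjp => ?_,
      fun ⟨i, hi⟩ hin => ?_⟩
    · simp only at hij hjp
      have := h1 ⟨i, by omega⟩ ⟨j, by omega⟩ hij hjp
      rw [hlt i hi (by omega), hlt j hj hjp] at this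
      simpa using this
    · simp only at hij hjp
      have := h2 ⟨i + 1, by omega⟩ ⟨j + 1, by omega⟩ (by simpa using hij) (by simp; omega)
      rw [hge i hi (by omega), hge j hj (by omega)] at this
      simpa using this
    · simp only at hin
      have := h3 ⟨i + 1, by omega⟩ (by simp; omega)
      rcases Nat.lt_or_ge i p with h | h
      · exfalso
        have h4 : (⟨i + 1, by omega⟩ : Fin (n + 1)) = ⟨p, by omega⟩ := by ext; simp; omega
        rw [h4, h0] at this
        simp at this
        omega
      · rw [hge i hi h] at this
        simp at this
        exact ⟨h, by omega⟩
  · rintro ⟨h1, h2, h3⟩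
    refine ⟨fun ⟨i, hi⟩ ⟨j, hj⟩ hij hjp => ?_, fun ⟨i, hi⟩ ⟨j, hj⟩ hij hjp => ?_,
      fun ⟨i, hi⟩ hin => ?_⟩
    · simp only at hij hjp
      rw [hlt i (by omega) (by omega), hlt j (by omega) hjp]
      simpa using h1 ⟨i, by omega⟩ ⟨j, by omega⟩ hij hjp
    · simp only at hij hjp
      obtain ⟨j, rfl⟩ : ∃ r, j = r + 1 := ⟨j - 1, by omega⟩
      rw [hge j (by omega) (by omega)]
      rcases hjp.eq_or_lt with h | h
      · subst h
        rw [h0]; exact Fin.succ_pos _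
      · obtain ⟨i, rfl⟩ : ∃ r, i = r + 1 := ⟨i - 1, by omega⟩
        rw [hge i (by omega) (by omega)]
        simpa using h2 ⟨i, by omega⟩ ⟨j, by omega⟩ (by simpa using hij) (by simp; omega)
    · simp only at hin
      obtain rfl : i = n := by omega
      refine ⟨hp, ?_⟩
      cases i with
      | zero => simp
      | succ i =>
        have := h3 ⟨i, by omega⟩ rfl
        rw [hge i (by omega) this.1]
        simp; omega

lemma SP_MP_c (p n : ℕ) (hp : p ≤ n) (c : Fin (n + 1)) (e : Equiv.Perm (Fin n))
    (h : SP p (n + 1) (MP c e)) : c = 0 ∨ c = ⟨p, by omega⟩ := by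
  obtain ⟨h1, h2, -⟩ := h
  by_contra! hc
  have c0 : 0 < (c : ℕ) := Fin.pos_iff_ne_zero.2 hc.1
  rcases Nat.lt_or_ge c p with h | h
  · have := h1 0 c c0 h
    rw [MP_self] at this
    simp at this
  · have hne : (c : ℕ) ≠ p := fun h => hc.2 (Fin.ext h)
    have := h2 ⟨p, by omega⟩ c (by simp; omega) le_rfl
    rw [MP_self] at this
    simp at this

lemma yL_A_zero (op : X → X → X) (p n : ℕ) (e : Equiv.Perm (Fin n)) (x : Fin (n + 1) → X) :
    yL op p (n + 1) (MP 0 e) x 0 = x 0 := by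
  unfold yL
  rw [MP_self]
  simp

lemma yL_A_succ (op : X → X → X) (p n : ℕ) (e : Equiv.Perm (Fin n)) (x : Fin (n + 1) → X)
    (k : Fin n) :
    yL op (p + 1) (n + 1) (MP 0 e) x k.succ = yL op p n e (fun i => x i.succ) k := by
  unfold yL
  have hs : MP 0 e k.succ = (e k).succ := by simpa using MP_succAbove 0 e k
  rw [hs, List.finRange_succ, List.filter_cons_of_neg, List.filter_map, List.foldr_map]
  · congr 2
    funext i
    simp [MP_symm_succ]
  · simp [MP_symm_zero]

lemma yL_B (op : X → X → X) (p n : ℕ) (hp : p ≤ n) (e : Equiv.Perm (Fin n))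
    (x : Fin (n + 1) → X) (k : ℕ) (hk : k < p) :
    yL op p (n + 1) (MP ⟨p, by omega⟩ e) x ⟨k, by omega⟩ =
      op (x 0) (yL op p n e (fun i => x i.succ) ⟨k, by omega⟩) := by
  unfold yL
  rw [MP_lt _ e k (by omega) hk, List.finRange_succ, List.filter_cons_of_pos, List.filter_map,
    List.foldr_cons, List.foldr_map]
  · congr 3
    funext i
    simp only [Function.comp, MP_symm_succ, Fin.succ_lt_succ_iff]
    congr 2
    rcases Nat.lt_or_ge (e.symm i) p with h | h
    · rw [Fin.succAbove_of_castSucc_lt _ _ h]; simp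
    · rw [Fin.succAbove_of_le_castSucc _ _ h]; simp; omega
  · simp [MP_symm_zero]

lemma ST_A (op : X → X → X) (p q n : ℕ) (h : n = p + q) (e : Equiv.Perm (Fin n))
    (x : Fin (n + 1) → X) (F G : List X → A) :
    STm op (p + 1) q (n + 1) (by omega) (MP 0 e) x F G =
      STm op p q n h e (fun i => x i.succ) (fun m => F (x 0 :: m)) G := by
  unfold STm
  have h1 : (List.ofFn fun k : Fin (p + 1) => yL op (p + 1) (n + 1) (MP 0 e) x ⟨k, by omega⟩) =
      x 0 :: List.ofFn fun k : Fin p => yL op p n e (fun i => x i.succ) ⟨k, by omega⟩ := by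
    rw [List.ofFn_succ]
    refine congrArg₂ List.cons (yL_A_zero op (p + 1) n e x) (congrArg List.ofFn ?_)
    funext k
    exact yL_A_succ op p n e x ⟨k, by omega⟩
  have h2 : ∀ k : Fin q, MP 0 e ⟨p + 1 + k, by omega⟩ = (e ⟨p + k, by omega⟩).succ := by
    intro k
    rw [← MP_ge 0 e (p + k) (by omega) (by simp)]
    congr 2
    omega
  simp only [h1, h2]

lemma ST_B (op : X → X → X) (p q n : ℕ) (h : n = p + q) (e : Equiv.Perm (Fin n))
    (x : Fin (n + 1) → X) (F G : List X → A) :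
    STm op p (q + 1) (n + 1) (by omega) (MP ⟨p, by omega⟩ e) x F G =
      STm op p q n h e (fun i => x i.succ) (fun m => F (m.map (op (x 0))))
        (fun m => G (x 0 :: m)) := by
  unfold STm
  have h1 : (List.ofFn fun k : Fin p => yL op p (n + 1) (MP ⟨p, by omega⟩ e) x ⟨k, by omega⟩) =
      (List.ofFn fun k : Fin p => yL op p n e (fun i => x i.succ) ⟨k, by omega⟩).map
        (op (x 0)) := by
    rw [List.map_ofFn]
    refine congrArg List.ofFn ?_
    funext k
    exact yL_B op p n (by omega) e x k k.2
  have h2 : (List.ofFn fun k : Fin (q + 1) => x (MP ⟨p, by omega⟩ e ⟨p + k, by omega⟩)) =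
      x 0 :: List.ofFn fun k : Fin q => x (e ⟨p + k, by omega⟩).succ := by
    rw [List.ofFn_succ]
    refine congrArg₂ List.cons (congrArg x (MP_self _ e)) (congrArg List.ofFn ?_)
    funext k
    exact congrArg x (MP_ge _ e (p + k) (by omega) (by simp))
  simp only [h1, h2]

lemma SS_eq_LR (op : X → X → X) (p q n : ℕ) (h : n = p + q)
    (x : Fin n → X) (F G : List X → A) :
    SS op p q n h x F G = LR op (List.ofFn x) p F G := by
  classical
  induction n generalizing p q F G with
  | zero =>
    obtain ⟨rfl, rfl⟩ : p = 0 ∧ q = 0 := by omega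
    have : SP 0 0 (default : Equiv.Perm (Fin 0)) :=
      ⟨fun i => i.elim0, fun i => i.elim0, fun i => i.elim0⟩
    simp [SS, STm, LR, SP]
  | succ n ih =>
    rw [List.ofFn_succ]
    cases q with
    | zero =>
      rw [← List.ofFn_succ, LR_big _ _ _ _ _ (by simp; omega) (by omega)]
      unfold SS
      apply Finset.sum_eq_zero
      intro σ _
      rw [if_neg]
      rintro ⟨-, -, h3⟩
      have := (h3 (Fin.last n) (by simp)).1
      simp at this
      omega
    | succ q =>
      have e1 : SS op p (q + 1) (n + 1) h x F G = ∑ c : Fin (n + 1), ∑ e : Equiv.Perm (Fin n),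
          if SP p (n + 1) (MP c e) then (Equiv.Perm.sign (MP c e) : ℤ) •
            STm op p (q + 1) (n + 1) h (MP c e) x F G else 0 := by
        unfold SS
        rw [← (MP_bij n).sum_comp, Fintype.sum_prod_type]
      have hB : (∑ e : Equiv.Perm (Fin n),
          if SP p (n + 1) (MP ⟨p, by omega⟩ e) then (Equiv.Perm.sign (MP ⟨p, by omega⟩ e) : ℤ) •
            STm op p (q + 1) (n + 1) h (MP ⟨p, by omega⟩ e) x F G else 0) =
          (-1 : ℤ) ^ p • SS op p q n (by omega) (fun i => x i.succ)
            (fun m => F (m.map (op (x 0)))) (fun m => G (x 0 :: m)) := by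
        unfold SS
        rw [Finset.smul_sum]
        apply Finset.sum_congr rfl
        intro e _
        rw [smul_ite, smul_zero, smul_smul]
        apply if_congr (SP_B p n (by omega) e) _ rfl
        rw [ST_B op p q n (by omega), MP_sign]
        simp
      rw [ih] at hB
      cases p with
      | zero =>
        rw [e1, Finset.sum_eq_single 0]
        · rw [show (0 : Fin (n + 1)) = ⟨0, by omega⟩ from rfl, hB]
          simp [LR]
        · intro c _ hc
          apply Finset.sum_eq_zero
          intro e _
          rw [if_neg]
          intro hs
          rcases SP_MP_c _ _ (by omega) _ _ hs with h | h
          · exact hc h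
          · exact hc h
        · simp
      | succ p =>
        have hA : (∑ e : Equiv.Perm (Fin n),
          if SP (p + 1) (n + 1) (MP 0 e) then (Equiv.Perm.sign (MP 0 e) : ℤ) •
            STm op (p + 1) (q + 1) (n + 1) h (MP 0 e) x F G else 0) =
            SS op p (q + 1) n (by omega) (fun i => x i.succ)
            (fun m => F (x 0 :: m)) G := by
          unfold SS
          apply Finset.sum_congr rfl
          intro e _
          apply if_congr (SP_A p n (by omega) e) _ rfl
          rw [ST_A op p (q + 1) n (by omega), MP_sign]
          simp
        rw [ih] at hA
        rw [e1, Fintype.sum_eq_add 0 ⟨p + 1, by omega⟩, hA, hB]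
        · simp only [LR]
          rw [if_pos (by simp; omega)]
        · intro h; simpa using congrArg Fin.val h
        · rintro c ⟨hc1, hc2⟩
          apply Finset.sum_eq_zero
          intro e _
          rw [if_neg]
          intro hs
          rcases SP_MP_c _ _ (by omega) _ _ hs with h | h
          · exact hc1 h
          · exact hc2 h

lemma yVal_eq (op : X → X → X) (p q : ℕ) (σ : Equiv.Perm (Fin (p + q)))
    (x : Fin (p + q) → X) (k : Fin p) :
    yVal op p q σ x k = yL op p (p + q) σ x ⟨k, by omega⟩ := by
  unfold yVal yL
  congr 1
  apply (Finset.sortedLT_sort _).eq_of_mem_iff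
  · exact ((List.sortedLT_finRange _).pairwise.filter _).sortedLT
  · simp

lemma succP_eq_SS (op : X → X → X) (p q : ℕ) (f₁ : (Fin p → X) → A) (f₂ : (Fin (q + 1) → X) → A)
    (F G : List X → A) (hF : ∀ v, F (List.ofFn v) = f₁ v) (hG : ∀ v, G (List.ofFn v) = f₂ v)
    (x : Fin (p + (q + 1)) → X) :
    succP op p (q + 1) f₁ f₂ x = LR op (List.ofFn x) p F G := by
  classical
  rw [← SS_eq_LR op p (q + 1) _ rfl]
  unfold succP SS ShT Sh
  rw [Finset.filter_filter, Finset.sum_filter]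
  apply Finset.sum_congr rfl
  intro σ _
  apply if_congr
  · unfold SP
    constructor
    · rintro ⟨⟨h1, h2⟩, h3⟩
      exact ⟨h1, h2, fun i hi => ⟨by omega, h3 i hi⟩⟩
    · rintro ⟨h1, h2, h3⟩
      exact ⟨⟨h1, h2⟩, fun i hi => (h3 i hi).2⟩
  · unfold STm
    rw [hF, hG]
    simp only [yVal_eq]
  · rfl

lemma rackDiff_eq (op : X → X → X) (n : ℕ) (f : (Fin n → X) → A) (F : List X → A)
    (hF : ∀ v, F (List.ofFn v) = f v) (x : Fin (n + 1) → X) :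
    LD op (List.ofFn x) F = rackDiff op f x := by
  induction n generalizing F with
  | zero =>
    have : ∀ a b : Fin 0 → X, f a = f b := fun a b => by rw [Subsingleton.elim a b]
    simp [LD, rackDiff, this _ (rackFace op true 0 x)]
  | succ n ih =>
    rw [List.ofFn_succ]
    simp only [LD]
    rw [ih (fun v => f (Fin.cons (x 0) v)) (fun m => F (x 0 :: m))
      (fun v => by rw [← hF]; simp [List.ofFn_succ])]
    unfold rackDiff
    rw [Fin.sum_univ_succ (n := n + 1), List.map_ofFn, hF, hF]
    have h1 : rackFace op false 0 x = op (x 0) ∘ fun i => x i.succ := by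
      funext k; simp [rackFace]
    have h2 : rackFace op true 0 x = fun i => x i.succ := by
      funext k; simp [rackFace]
    have h3 : ∀ (b : Bool) (j : Fin (n + 1)), rackFace op b j.succ x =
        Fin.cons (x 0) (rackFace op b j (fun i => x i.succ)) := by
      intro b j
      funext k
      refine Fin.cases ?_ (fun k => ?_) k
      · simp [rackFace]
      · simp [rackFace]
    simp only [h1, h2, h3, Fin.val_succ, Fin.val_zero, pow_succ _ (_ + 1), mul_neg_one, neg_smul,
      Finset.sum_neg_distrib]
    simp only [zero_add, pow_one, neg_smul, one_smul]
    abel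

/-- Extend a cochain to lists. -/
def EL (n : ℕ) (f : (Fin n → X) → A) (l : List X) : A :=
  if h : l.length = n then f (fun i => l.get (i.cast h.symm)) else 0

lemma EL_ofFn (n : ℕ) (f : (Fin n → X) → A) (v : Fin n → X) : EL n f (List.ofFn v) = f v := by
  unfold EL
  rw [dif_pos (by simp)]
  congr 1
  funext i
  simp

lemma succP_zero (op : X → X → X) (p : ℕ) (f₁ : (Fin p → X) → A) (f₂ : (Fin 0 → X) → A)
    (x : Fin (p + 0) → X) : succP op p 0 f₁ f₂ x = f₁ x * f₂ Fin.elim0 := by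
  have h : ShT p 0 = {1} := by
    ext σ
    simp only [ShT, Sh, Finset.mem_filter, Finset.mem_univ, true_and, Finset.mem_singleton]
    constructor
    · rintro ⟨⟨h1, -⟩, -⟩
      have hm : StrictMono σ := fun i j hij => h1 i j hij j.2
      ext i
      have : (hm.orderIsoOfSurjective σ σ.surjective) = OrderIso.refl _ := Subsingleton.elim _ _
      have := congrArg (fun g => ((g i : Fin _) : ℕ)) this
      simpa using this
    · rintro rfl
      exact ⟨⟨fun i j h _ => h, fun i j h _ => h⟩, fun i h => h⟩
  unfold succP
  rw [h, Finset.sum_singleton]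
  have h2 : ∀ k, yVal op p 0 1 x k = x k := by
    intro k
    unfold yVal
    rw [Finset.filter_false_of_mem]
    · simp
    · intro i _ h
      have : (i : ℕ) < p := i.2
      have := h.1
      simp at this
      omega
  simp only [h2, Equiv.Perm.sign_one, Units.val_one, one_smul]
  congr 2
  funext k
  exact k.elim0

end Aux

/-- For a rack `(X, ▷)` and an associative ring `A` (trivial coefficients),
the rack differential is a derivation for `≻`:
`d_R(f₁ ≻ f₂) = (d_R f₁) ≻ f₂ + (−1)^{p₁} f₁ ≻ (d_R f₂)`. -/
theorem statement3 {X A : Type*} [Ring A] (op : X → X → X)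
    (hself : ∀ x y z : X, op x (op y z) = op (op x y) (op x z))
    (hbij : ∀ x : X, Function.Bijective (op x))
    (p₁ p₂ : ℕ) (f₁ : (Fin p₁ → X) → A) (f₂ : (Fin p₂ → X) → A)
    (x : Fin (p₁ + p₂ + 1) → X) :
    rackDiff op (succP op p₁ p₂ f₁ f₂) x =
      succP op (p₁ + 1) p₂ (rackDiff op f₁) f₂
        (x ∘ Fin.cast (show p₁ + 1 + p₂ = p₁ + p₂ + 1 by omega)) +
      ((-1 : ℤ) ^ p₁) •
        succP op p₁ (p₂ + 1) f₁ (rackDiff op f₂)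
          (x ∘ Fin.cast (show p₁ + (p₂ + 1) = p₁ + p₂ + 1 by omega)) := by
  cases p₂ with
  | zero =>
    have hz : rackDiff op f₂ = fun _ => 0 := by
      funext v
      have : ∀ a b : Fin 0 → X, f₂ a = f₂ b := fun a b => by rw [Subsingleton.elim a b]
      unfold rackDiff
      apply Finset.sum_eq_zero
      intro j _
      rw [this _ (rackFace op true j v), sub_self, smul_zero]
    rw [hz]
    have h0 : ∀ v, succP op p₁ (0 + 1) f₁ (fun _ => 0) v = 0 := by
      intro v
      simp [succP]
    have h1 := succP_zero op (p₁ + 1) (rackDiff op f₁) f₂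
        (x ∘ Fin.cast (show p₁ + 1 + 0 = p₁ + 0 + 1 by omega))
    rw [h0, smul_zero, h1]
    refine Eq.trans ?_ (add_zero _).symm
    unfold rackDiff
    rw [Finset.sum_mul]
    apply Finset.sum_congr rfl
    intro j _
    rw [succP_zero, succP_zero, ← sub_mul, smul_mul_assoc]
    rfl
  | succ q =>
    have hF := EL_ofFn p₁ f₁
    have hG := EL_ofFn (q + 1) f₂
    rw [← rackDiff_eq op _ _ (fun m => LR op m p₁ (EL p₁ f₁) (EL (q + 1) f₂))
      (fun v => (succP_eq_SS op p₁ q f₁ f₂ _ _ hF hG v).symm), LD_LR op hself,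
      succP_eq_SS op (p₁ + 1) q _ f₂ (fun m => LD op m (EL p₁ f₁)) _
        (rackDiff_eq op _ _ _ hF) hG,
      succP_eq_SS op p₁ (q + 1) f₁ _ _ (fun m => LD op m (EL (q + 1) f₂)) hF
        (rackDiff_eq op _ _ _ hG)]
    have e1 : List.ofFn (x ∘ Fin.cast (show p₁ + 1 + (q + 1) = p₁ + (q + 1) + 1 by omega)) =
        List.ofFn x := by
      apply List.ext_getElem
      · simp; try omega
      · intro i h1 h2
        simp only [List.getElem_ofFn]
        rfl
    have e2 : List.ofFn (x ∘ Fin.cast (show p₁ + (q + 1 + 1) = p₁ + (q + 1) + 1 by omega)) =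
        List.ofFn x := by
      apply List.ext_getElem
      · simp; try omega
      · intro i h1 h2
        simp only [List.getElem_ofFn]
        rfl
    rw [e1, e2]
end

section
/- Let X be a rack and A an associative (not necessarily commutative) ring, regarded as a trivial X-module. For all p₁, p₂ ≥ 0 and all f₁ : X^{p₁} → A, f₂ : X^{p₂} → A, one has d_R^{p₁+p₂+1}(f₁ ≺ f₂) = (d_R^{p₁+1} f₁) ≺ f₂ + (−1)^{p₁} f₁ ≺ (d_R^{p₂+1} f₂) as functions X^{p₁+p₂+1} → A. -/
/-! helper material -/

/-- extend a permutation by `k ↦ j`. -/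
def extP {n : ℕ} (k j : Fin (n + 1)) (σ : Equiv.Perm (Fin n)) : Equiv.Perm (Fin (n + 1)) :=
  ((finSuccEquiv' k).trans (Equiv.optionCongr σ)).trans (finSuccEquiv' j).symm

@[simp] lemma extP_self {n : ℕ} (k j : Fin (n + 1)) (σ : Equiv.Perm (Fin n)) :
    extP k j σ k = j := by simp [extP]

@[simp] lemma extP_succAbove {n : ℕ} (k j : Fin (n + 1)) (σ : Equiv.Perm (Fin n)) (i : Fin n) :
    extP k j σ (k.succAbove i) = j.succAbove (σ i) := by simp [extP]

@[simp] lemma extP_symm_self {n : ℕ} (k j : Fin (n + 1)) (σ : Equiv.Perm (Fin n)) :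
    (extP k j σ).symm j = k := by rw [Equiv.symm_apply_eq]; simp

@[simp] lemma extP_symm_succAbove {n : ℕ} (k j : Fin (n + 1)) (σ : Equiv.Perm (Fin n)) (i : Fin n) :
    (extP k j σ).symm (j.succAbove i) = k.succAbove (σ.symm i) := by
  rw [Equiv.symm_apply_eq]; simp

lemma extP_inj {n : ℕ} (k j : Fin (n + 1)) (σ σ' : Equiv.Perm (Fin n))
    (h : extP k j σ = extP k j σ') : σ = σ' := by
  ext1 i
  have := congrArg (fun e => e (k.succAbove i)) h
  simpa using this

lemma extP_surj {n : ℕ} (k : Fin (n + 1)) (τ : Equiv.Perm (Fin (n + 1))) :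
    ∃ σ, τ = extP k (τ k) σ := by
  let e : Option (Fin n) ≃ Option (Fin n) :=
    ((finSuccEquiv' k).symm.trans τ).trans (finSuccEquiv' (τ k))
  refine ⟨Equiv.removeNone e, ?_⟩
  ext1 i
  rcases Fin.eq_self_or_eq_succAbove k i with rfl | ⟨i, rfl⟩
  · simp
  · rw [extP_succAbove]
    have hne : τ (k.succAbove i) ≠ τ k := fun h => Fin.succAbove_ne k i (τ.injective h)
    obtain ⟨m, hm⟩ := Fin.exists_succAbove_eq hne
    have he : e (some i) = some m := by simp [e, ← hm]
    have := Equiv.removeNone_some e ⟨m, he⟩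
    rw [he] at this
    rw [Option.some.inj this, hm]

lemma extP_sign {n : ℕ} (k j : Fin (n + 1)) (σ : Equiv.Perm (Fin n)) :
    (Equiv.Perm.sign (extP k j σ) : ℤ) = (-1) ^ ((j : ℕ) + k) * Equiv.Perm.sign σ := by
  have : extP k j σ = (Fin.cycleRange j)⁻¹ * Equiv.Perm.decomposeFin.symm (0, σ) *
      Fin.cycleRange k := by
    ext1 i
    rcases Fin.eq_self_or_eq_succAbove k i with rfl | ⟨i, rfl⟩
    · simp [Equiv.Perm.mul_apply]
    · simp [Equiv.Perm.mul_apply]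
  rw [this]
  simp [Fin.sign_cycleRange, pow_add]
  ring

/-- increasing on both blocks -/
def incP {N : ℕ} (p : ℕ) (σ : Equiv.Perm (Fin N)) : Prop :=
  ∀ i j : Fin N, i < j → ((j : ℕ) < p ∨ p ≤ (i : ℕ)) → σ i < σ j

/-- `k` is the cut position -/
def cutP {n : ℕ} (lo hi : ℕ) (k j : Fin (n + 1)) (σ : Equiv.Perm (Fin n)) : Prop :=
  ∀ i : Fin n, lo ≤ (i : ℕ) → (i : ℕ) < hi → ((i : ℕ) < k ↔ (σ i : ℕ) < j)

lemma succAbove_val {n : ℕ} (k : Fin (n + 1)) (i : Fin n) :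
    (k.succAbove i : ℕ) = if (i : ℕ) < k then (i : ℕ) else i + 1 := by
  simp only [Fin.succAbove, Fin.lt_def, Fin.val_castSucc]
  split_ifs <;> simp

lemma incP_ext1 {n p : ℕ} (k j : Fin (n + 1)) (σ : Equiv.Perm (Fin n)) (hk : (k : ℕ) ≤ p) :
    incP (p + 1) (extP k j σ) ↔ incP p σ ∧ cutP 0 p k j σ := by
  constructor
  · intro h
    refine ⟨fun a b hab hp => ?_, fun i _ hi => ?_⟩
    · have := h (k.succAbove a) (k.succAbove b) (by simpa using hab) (by
        rw [succAbove_val, succAbove_val]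
        rw [Fin.lt_def] at hab
        split_ifs <;> omega)
      simpa using this
    · constructor
      · intro hik
        have := h (k.succAbove i) k (by rw [Fin.lt_def, succAbove_val]; simp [hik]) (by omega)
        rw [extP_self, extP_succAbove, Fin.lt_def, succAbove_val] at this
        split_ifs at this <;> omega
      · intro hij
        by_contra hik
        have := h k (k.succAbove i) (by rw [Fin.lt_def, succAbove_val]; simp [hik]; omega)
          (by rw [succAbove_val]; split_ifs <;> omega)
        rw [extP_self, extP_succAbove, Fin.lt_def, succAbove_val] at this
        split_ifs at this <;> omega
  · rintro ⟨h, hc⟩ a b hab hp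
    rcases Fin.eq_self_or_eq_succAbove k a with ha | ⟨a, rfl⟩ <;>
      rcases Fin.eq_self_or_eq_succAbove k b with hb | ⟨b, rfl⟩
    · rw [ha, hb] at hab; exact absurd hab (lt_irrefl _)
    · subst ha
      rw [extP_self, extP_succAbove, Fin.lt_def, succAbove_val]
      rw [Fin.lt_def, succAbove_val] at hab
      rw [succAbove_val] at hp
      have := hc b
      split_ifs at * <;> omega
    · subst hb
      rw [extP_self, extP_succAbove, Fin.lt_def, succAbove_val]
      rw [Fin.lt_def, succAbove_val] at hab
      rw [succAbove_val] at hp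
      have := hc a
      split_ifs at * <;> omega
    · rw [extP_succAbove, extP_succAbove]
      have hab' : a < b := by simpa using hab
      have := h a b hab' (by
        rw [succAbove_val, succAbove_val] at hp
        rw [Fin.lt_def] at hab'
        split_ifs at hp <;> omega)
      simpa using this

lemma incP_ext2 {n p : ℕ} (k j : Fin (n + 1)) (σ : Equiv.Perm (Fin n)) (hk : p ≤ (k : ℕ)) :
    incP p (extP k j σ) ↔ incP p σ ∧ cutP p n k j σ := by
  constructor
  · intro h
    refine ⟨fun a b hab hp => ?_, fun i hi _ => ?_⟩
    · have := h (k.succAbove a) (k.succAbove b) (by simpa using hab) (by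
        rw [succAbove_val, succAbove_val]
        rw [Fin.lt_def] at hab
        split_ifs <;> omega)
      simpa using this
    · constructor
      · intro hik
        have := h (k.succAbove i) k (by rw [Fin.lt_def, succAbove_val]; simp [hik])
          (by rw [succAbove_val]; split_ifs <;> omega)
        rw [extP_self, extP_succAbove, Fin.lt_def, succAbove_val] at this
        split_ifs at this <;> omega
      · intro hij
        by_contra hik
        have := h k (k.succAbove i) (by rw [Fin.lt_def, succAbove_val]; simp [hik]; omega)
          (by omega)
        rw [extP_self, extP_succAbove, Fin.lt_def, succAbove_val] at this
        split_ifs at this <;> omega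
  · rintro ⟨h, hc⟩ a b hab hp
    rcases Fin.eq_self_or_eq_succAbove k a with ha | ⟨a, rfl⟩ <;>
      rcases Fin.eq_self_or_eq_succAbove k b with hb | ⟨b, rfl⟩
    · rw [ha, hb] at hab; exact absurd hab (lt_irrefl _)
    · subst ha
      rw [extP_self, extP_succAbove, Fin.lt_def, succAbove_val]
      rw [Fin.lt_def, succAbove_val] at hab
      rw [succAbove_val] at hp
      have := hc b
      split_ifs at * <;> omega
    · subst hb
      rw [extP_self, extP_succAbove, Fin.lt_def, succAbove_val]
      rw [Fin.lt_def, succAbove_val] at hab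
      rw [succAbove_val] at hp
      have := hc a
      split_ifs at * <;> omega
    · rw [extP_succAbove, extP_succAbove]
      have hab' : a < b := by simpa using hab
      have := h a b hab' (by
        rw [succAbove_val, succAbove_val] at hp
        rw [Fin.lt_def] at hab'
        split_ifs at hp <;> omega)
      simpa using this

lemma cut_exists {n : ℕ} (lo hi : ℕ) (hlo : lo ≤ hi) (hhi : hi ≤ n) (j : Fin (n + 1))
    (σ : Equiv.Perm (Fin n))
    (hm : ∀ a b : Fin n, a < b → lo ≤ (a : ℕ) → (b : ℕ) < hi → σ a < σ b) :
    ∃ k : Fin (n + 1), lo ≤ (k : ℕ) ∧ (k : ℕ) ≤ hi ∧ cutP lo hi k j σ := by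
  classical
  let P : ℕ → Prop := fun k => lo ≤ k ∧ (hi ≤ k ∨ ∃ h : k < n, (j : ℕ) ≤ σ ⟨k, h⟩)
  have hP : ∃ k, P k := ⟨hi, hlo, Or.inl le_rfl⟩
  have hle : Nat.find hP ≤ hi := Nat.find_le ⟨hlo, Or.inl le_rfl⟩
  have hs := Nat.find_spec hP
  have hmin : ∀ m, m < Nat.find hP → ¬ P m := fun m hm => Nat.find_min hP hm
  generalize Nat.find hP = k at *
  refine ⟨⟨k, by omega⟩, hs.1, hle, fun i hil hih => ⟨fun hik => ?_, fun hij => ?_⟩⟩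
  · by_contra hcon
    exact hmin i hik ⟨hil, Or.inr ⟨i.2, by simpa using hcon⟩⟩
  · by_contra hki
    simp only [not_lt] at hki
    rcases hs.2 with h | ⟨h, h2⟩
    · omega
    · rcases hki.eq_or_lt with h3 | h3
      · subst h3; simp at h2; omega
      · have := hm ⟨k, h⟩ i (by rw [Fin.lt_def]; exact h3) hs.1 hih
        rw [Fin.lt_def] at this
        omega

lemma cut_unique {n : ℕ} (lo hi : ℕ) (hhi : hi ≤ n) (j : Fin (n + 1))
    (σ : Equiv.Perm (Fin n)) (k k' : Fin (n + 1)) (h1 : lo ≤ (k : ℕ)) (h2 : (k : ℕ) ≤ hi)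
    (h1' : lo ≤ (k' : ℕ)) (h2' : (k' : ℕ) ≤ hi)
    (h : cutP lo hi k j σ) (h' : cutP lo hi k' j σ) : k = k' := by
  by_contra hne
  rcases lt_or_gt_of_ne hne with hl | hl
  · rw [Fin.lt_def] at hl
    have a := h ⟨k, by omega⟩ h1 (by simp; omega)
    have b := h' ⟨k, by omega⟩ h1 (by simp; omega)
    simp at a b; omega
  · have hl' : (k' : ℕ) < k := hl
    have a := h ⟨k', by omega⟩ h1' (by simp; omega)
    have b := h' ⟨k', by omega⟩ h1' (by simp; omega)
    simp at a b; omega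

open Classical in
lemma reindexP {A : Type*} [AddCommGroup A] {n m lo hi : ℕ} (hhi : hi ≤ n) (hm : lo + m = hi + 1)
    (hlo : lo ≤ hi)
    (κ : Fin m → Fin (n + 1)) (hκ : ∀ i, (κ i : ℕ) = lo + i)
    (R : Equiv.Perm (Fin (n + 1)) → Prop) (S : Equiv.Perm (Fin n) → Prop)
    (hRS : ∀ (k j : Fin (n + 1)) σ, lo ≤ (k : ℕ) → (k : ℕ) ≤ hi → (R (extP k j σ) ↔ S σ ∧ cutP lo hi k j σ))
    (hS : ∀ σ, S σ → ∀ a b : Fin n, a < b → lo ≤ (a : ℕ) → (b : ℕ) < hi → σ a < σ b)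
    (G : Equiv.Perm (Fin (n + 1)) → Fin m → A) (F : Fin (n + 1) → Equiv.Perm (Fin n) → A)
    (hGF : ∀ i j σ, S σ → cutP lo hi (κ i) j σ → G (extP (κ i) j σ) i = F j σ) :
    ∑ τ ∈ Finset.univ.filter R, ∑ i, G τ i =
      ∑ j, ∑ σ ∈ Finset.univ.filter S, F j σ := by
  have hcut : ∀ j σ, S σ → ∃ i : Fin m, cutP lo hi (κ i) j σ := by
    intro j σ hσ
    obtain ⟨k, h1, h2, h3⟩ := cut_exists lo hi hlo hhi j σ (hS σ hσ)
    refine ⟨⟨k - lo, by omega⟩, ?_⟩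
    have : κ ⟨k - lo, by omega⟩ = k := by
      ext; rw [hκ]; simp; omega
    rwa [this]
  have hr : ∀ i, lo ≤ (κ i : ℕ) ∧ (κ i : ℕ) ≤ hi := fun i => by
    rw [hκ]; have := i.2; omega
  rw [← Finset.sum_product', ← Finset.sum_product', eq_comm]
  refine Finset.sum_bij (fun a ha => 
    (extP (κ (hcut a.1 a.2 (by simpa using ha)).choose) a.1 a.2,
      (hcut a.1 a.2 (by simpa using ha)).choose)) ?_ ?_ ?_ ?_
  · rintro ⟨j, σ⟩ ha
    have hσ : S σ := by simpa using ha
    have := (hcut j σ hσ).choose_spec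
    simp only [Finset.mem_product, Finset.mem_filter, Finset.mem_univ, true_and, and_true]
    exact (hRS _ _ _ (hr _).1 (hr _).2).2 ⟨hσ, this⟩
  · rintro ⟨j, σ⟩ ha ⟨j', σ'⟩ ha' h
    have hσ : S σ := by simpa using ha
    have hσ' : S σ' := by simpa using ha'
    simp only [Prod.mk.injEq] at h
    obtain ⟨h1, h2⟩ := h
    rw [← h2] at h1
    have hj : j = j' := by
      have := congrArg (fun e => e (κ (hcut j σ hσ).choose)) h1
      simpa using this
    subst hj
    rw [extP_inj _ _ _ _ h1]
  · rintro ⟨τ, i⟩ h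
    have hR : R τ := by simpa using h
    obtain ⟨σ, hσ⟩ := extP_surj (κ i) τ
    have h' := hR
    rw [hσ, hRS _ _ _ (hr _).1 (hr _).2] at h'
    refine ⟨(τ (κ i), σ), by simpa using h'.1, ?_⟩
    have hi : (hcut (τ (κ i)) σ h'.1).choose = i := by
      have hu := cut_unique lo hi hhi _ σ _ _ (hr _).1 (hr _).2 (hr _).1 (hr _).2
        (hcut (τ (κ i)) σ h'.1).choose_spec h'.2
      have := congrArg Fin.val hu
      rw [hκ, hκ] at this
      ext; omega
    simp only [hi]
    rw [← hσ]
  · rintro ⟨j, σ⟩ ha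
    have hσ : S σ := by simpa using ha
    exact (hGF _ _ _ hσ (hcut j σ hσ).choose_spec).symm

/-- twisted value -/
def YV {X : Type*} {N : ℕ} (op : X → X → X) (x : Fin N → X) (T : Finset (Fin N)) (i : Fin N) : X :=
  ((T.filter (· < i)).sort (· ≤ ·)).foldr (fun i acc => op (x i) acc) (x i)

lemma sort_split {N : ℕ} (T : Finset (Fin N)) (j k : Fin N) (hjk : j < k) (hj : j ∉ T) :
    (T.filter (· < k)).sort (· ≤ ·) =
      (T.filter (· < j)).sort (· ≤ ·) ++ (T.filter (fun i => j < i ∧ i < k)).sort (· ≤ ·) := by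
  rw [eq_comm]
  have hnd : ((T.filter (· < j)).sort (· ≤ ·) ++
      (T.filter (fun i => j < i ∧ i < k)).sort (· ≤ ·)).Nodup := by
    rw [List.nodup_append]
    refine ⟨Finset.sort_nodup _ _, Finset.sort_nodup _ _, ?_⟩
    intro a ha b hb
    simp at ha hb
    exact (ha.2.trans hb.2.1).ne
  rw [← (List.toFinset_sort (· ≤ ·) hnd).2]
  · congr 1
    ext a
    simp
    rcases lt_trichotomy a j with h | h | h
    · simp [h, h.trans hjk, h.not_gt]
    · subst h; simp [hj]
    · simp [h, h.not_gt]
  · rw [List.pairwise_append]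
    refine ⟨Finset.pairwise_sort _ _, Finset.pairwise_sort _ _, ?_⟩
    intro a ha b hb
    simp at ha hb
    exact (ha.2.trans hb.2.1).le

lemma sort_split_insert {N : ℕ} (T : Finset (Fin N)) (j k : Fin N) (hjk : j < k) (hj : j ∉ T) :
    ((insert j T).filter (· < k)).sort (· ≤ ·) =
      (T.filter (· < j)).sort (· ≤ ·) ++
        (j :: (T.filter (fun i => j < i ∧ i < k)).sort (· ≤ ·)) := by
  rw [eq_comm]
  have hnd : ((T.filter (· < j)).sort (· ≤ ·) ++
      (j :: (T.filter (fun i => j < i ∧ i < k)).sort (· ≤ ·))).Nodup := by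
    rw [List.nodup_append]
    refine ⟨Finset.sort_nodup _ _, ?_, ?_⟩
    · rw [List.nodup_cons]; exact ⟨by simp, Finset.sort_nodup _ _⟩
    intro a ha b hb
    simp at ha hb
    rcases hb with rfl | hb
    · exact ha.2.ne
    exact (ha.2.trans hb.2.1).ne
  rw [← (List.toFinset_sort (· ≤ ·) hnd).2]
  · congr 1
    ext a
    simp
    rcases lt_trichotomy a j with h | h | h
    · simp [h, h.trans hjk, h.ne, h.not_gt]
    · subst h; simp [hjk]
    · simp [h, h.not_gt, h.ne']
  · rw [List.pairwise_append]
    refine ⟨Finset.pairwise_sort _ _, ?_, ?_⟩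
    · rw [List.pairwise_cons]
      exact ⟨fun a ha => by simp at ha; exact ha.2.1.le, Finset.pairwise_sort _ _⟩
    intro a ha b hb
    simp at ha hb
    rcases hb with rfl | hb
    · exact ha.2.le
    exact (ha.2.trans hb.2.1).le

lemma foldr_op {X ι : Type*} (op : X → X → X)
    (hself : ∀ x y z : X, op x (op y z) = op (op x y) (op x z)) (x : ι → X) (l : List ι) (a b : X) :
    op (l.foldr (fun i acc => op (x i) acc) a) (l.foldr (fun i acc => op (x i) acc) b) =
      l.foldr (fun i acc => op (x i) acc) (op a b) := by
  induction l with
  | nil => rfl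
  | cons c l ih => simp [← hself, ih]

lemma foldr_op' {X ι : Type*} (op : X → X → X)
    (hself : ∀ x y z : X, op x (op y z) = op (op x y) (op x z)) (x : ι → X) (l : List ι) (a b : X) :
    op a (l.foldr (fun i acc => op (x i) acc) b) =
      l.foldr (fun i acc => op (op a (x i)) acc) (op a b) := by
  induction l with
  | nil => rfl
  | cons c l ih => simp only [List.foldr_cons]; rw [hself, ih]

lemma YV_insert_lt {X : Type*} {N : ℕ} (op : X → X → X)
    (hself : ∀ x y z : X, op x (op y z) = op (op x y) (op x z)) (x : Fin N → X)
    (T : Finset (Fin N)) (j k : Fin N) (hjk : j < k) (hj : j ∉ T) :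
    YV op x (insert j T) k = op (YV op x T j) (YV op x T k) := by
  unfold YV
  rw [sort_split_insert T j k hjk hj, sort_split T j k hjk hj, List.foldr_append, List.foldr_append,
    foldr_op op hself, List.foldr_cons]

lemma YV_insert_ge {X : Type*} {N : ℕ} (op : X → X → X) (x : Fin N → X)
    (T : Finset (Fin N)) (j k : Fin N) (hjk : k ≤ j) :
    YV op x (insert j T) k = YV op x T k := by
  unfold YV
  rw [Finset.filter_insert, if_neg (not_lt.2 hjk)]

lemma YV_comp {X : Type*} {n N : ℕ} (op : X → X → X) (x : Fin N → X) (g : Fin n ↪o Fin N)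
    (T : Finset (Fin n)) (i : Fin n) :
    YV op (fun i => x (g i)) T i = YV op x (T.map g.toEmbedding) (g i) := by
  unfold YV
  have : ((T.map g.toEmbedding).filter (· < g i)) = (T.filter (· < i)).map g.toEmbedding := by
    ext a; simp only [Finset.mem_filter, Finset.mem_map]
    constructor
    · rintro ⟨⟨b, hb, rfl⟩, h⟩
      exact ⟨b, ⟨hb, by simpa using h⟩, rfl⟩
    · rintro ⟨b, ⟨hb, h⟩, rfl⟩
      exact ⟨⟨b, hb, rfl⟩, by simpa using h⟩
  rw [this, ← Finset.map_sort g.toEmbedding _ (· ≤ ·) (· ≤ ·) (by simp), List.foldr_map]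
  rfl

/-- the lists below a cut -/
lemma YV_face {X : Type*} {n : ℕ} (op : X → X → X)
    (hself : ∀ x y z : X, op x (op y z) = op (op x y) (op x z)) (x : Fin (n + 1) → X)
    (j : Fin (n + 1)) (T : Finset (Fin n)) (i : Fin n) :
    YV op (rackFace op false j x) T i =
      YV op x (insert j (T.map (Fin.succAboveOrderEmb j).toEmbedding)) (j.succAbove i) := by
  set T' := T.map (Fin.succAboveOrderEmb j).toEmbedding with hT'
  have hj : j ∉ T' := by
    simp only [T', Finset.mem_map, not_exists, not_and]
    intro a _ h
    exact Fin.succAbove_ne j a h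
  -- a modified tuple on `Fin (n+1)`
  let x' : Fin (n + 1) → X := fun a => if a < j then x a else op (x j) (x a)
  have hf : rackFace op false j x = fun i => x' ((Fin.succAboveOrderEmb j) i) := by
    funext a
    have hv := succAbove_val j a
    have : (a : ℕ) < j ↔ j.succAbove a < j := by
      rw [Fin.lt_def, hv]; split_ifs <;> omega
    simp only [rackFace, x', Fin.succAboveOrderEmb_apply, ← this]
    by_cases h : (a : ℕ) < j
    · simp only [h, if_true]
      congr 1; ext; rw [hv]; simp [h]
    · simp only [h, if_false]
      simp only [Bool.false_eq_true, if_false]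
      congr 2; ext; rw [hv]; simp [h]
  rw [hf, YV_comp, ← hT', Fin.succAboveOrderEmb_apply]
  generalize hk : j.succAbove i = k
  have hkj : k ≠ j := by rw [← hk]; exact Fin.succAbove_ne j i
  rcases lt_or_gt_of_ne hkj with h | h
  · rw [YV_insert_ge _ _ _ _ _ h.le]
    unfold YV
    have hx : x' k = x k := by simp [x', h]
    rw [hx]
    apply List.foldr_ext
    intro a ha b
    simp at ha
    simp [x', ha.2.trans h]
  · unfold YV
    rw [sort_split_insert T' j k h hj, sort_split T' j k h hj, List.foldr_append,
      List.foldr_append, List.foldr_cons, foldr_op' op hself]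
    have hx : x' k = op (x j) (x k) := by simp [x', h.not_gt]
    rw [hx]
    have e2 : ∀ c, ((T'.filter (fun i => j < i ∧ i < k)).sort (· ≤ ·)).foldr
        (fun i acc => op (x' i) acc) c = ((T'.filter (fun i => j < i ∧ i < k)).sort (· ≤ ·)).foldr
        (fun i acc => op (op (x j) (x i)) acc) c := by
      intro c
      apply List.foldr_ext
      intro a ha b
      simp at ha
      simp [x', ha.2.1.not_gt]
    rw [e2]
    apply List.foldr_ext
    intro a ha b
    simp at ha
    simp [x', ha.2]

lemma face_true {X : Type*} {n : ℕ} (op : X → X → X) (x : Fin (n + 1) → X) (j : Fin (n + 1)) :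
    rackFace op true j x = fun i => x (j.succAbove i) := by
  funext a
  have hv := succAbove_val j a
  simp only [rackFace]
  split_ifs with h
  · congr 1; ext; rw [hv]; simp [h]
  · congr 1; ext; rw [hv]; simp [h]

lemma face_false {X : Type*} {n : ℕ} (op : X → X → X) (x : Fin (n + 1) → X) (j : Fin (n + 1))
    (i : Fin n) :
    rackFace op false j x i =
      if (i : ℕ) < j then x (j.succAbove i) else op (x j) (x (j.succAbove i)) := by
  have hv := succAbove_val j i
  simp only [rackFace]
  by_cases h : (i : ℕ) < j
  · simp only [h, if_true]
    congr 1; ext; rw [hv]; simp [h]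
  · simp only [h, if_false]
    simp only [Bool.false_eq_true, if_false]
    congr 2; ext; rw [hv]; simp [h]

/-- last element lies in the first block -/
def lastP {N : ℕ} (p : ℕ) (σ : Equiv.Perm (Fin N)) : Prop :=
  p = 0 ∨ ∀ i : Fin N, (i : ℕ) + 1 = N → (σ.symm i : ℕ) < p

/-- values in the second block -/
def TS {N : ℕ} (p : ℕ) (σ : Equiv.Perm (Fin N)) : Finset (Fin N) :=
  Finset.univ.filter fun i => p ≤ (σ.symm i : ℕ)

/-- shifted second block -/
def TM {n : ℕ} (p : ℕ) (j : Fin (n + 1)) (σ : Equiv.Perm (Fin n)) : Finset (Fin (n + 1)) :=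
  (TS p σ).map (Fin.succAboveOrderEmb j).toEmbedding

lemma mem_TM_succAbove {n : ℕ} (p : ℕ) (j : Fin (n + 1)) (σ : Equiv.Perm (Fin n)) (i : Fin n) :
    j.succAbove i ∈ TM p j σ ↔ p ≤ (σ.symm i : ℕ) := by
  have : j.succAbove i = (Fin.succAboveOrderEmb j).toEmbedding i := rfl
  rw [TM, this, Finset.mem_map']
  simp [TS]

lemma not_mem_TM {n : ℕ} (p : ℕ) (j : Fin (n + 1)) (σ : Equiv.Perm (Fin n)) :
    j ∉ TM p j σ := by
  simp only [TM, Finset.mem_map, not_exists, not_and]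
  intro a _ h
  exact Fin.succAbove_ne j a h

lemma TS_ext1 {n : ℕ} (p : ℕ) (k j : Fin (n + 1)) (σ : Equiv.Perm (Fin n)) (hk : (k : ℕ) ≤ p) :
    TS (p + 1) (extP k j σ) = TM p j σ := by
  ext a
  rcases Fin.eq_self_or_eq_succAbove j a with rfl | ⟨a, rfl⟩
  · simp [TS, not_mem_TM]; omega
  · rw [mem_TM_succAbove]
    simp only [TS, Finset.mem_filter, Finset.mem_univ, true_and, extP_symm_succAbove]
    rw [succAbove_val]; split_ifs <;> omega

lemma TS_ext2 {n : ℕ} (p : ℕ) (k j : Fin (n + 1)) (σ : Equiv.Perm (Fin n)) (hk : p ≤ (k : ℕ)) :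
    TS p (extP k j σ) = insert j (TM p j σ) := by
  ext a
  rcases Fin.eq_self_or_eq_succAbove j a with rfl | ⟨a, rfl⟩
  · simp [TS, hk]
  · rw [Finset.mem_insert, mem_TM_succAbove]
    simp only [TS, Finset.mem_filter, Finset.mem_univ, true_and, extP_symm_succAbove,
      Fin.succAbove_ne, false_or]
    rw [succAbove_val]; split_ifs <;> omega

lemma succAbove_last_iff {n : ℕ} (j : Fin (n + 1)) (hj : (j : ℕ) ≠ n) (a : Fin n) :
    (j.succAbove a : ℕ) + 1 = n + 1 ↔ (a : ℕ) + 1 = n := by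
  rw [succAbove_val]; split_ifs <;> omega

lemma last_ext1 {n : ℕ} (p : ℕ) (k j : Fin (n + 1)) (σ : Equiv.Perm (Fin n)) (hk : (k : ℕ) ≤ p)
    (hp : p ≠ 0) (hj : (j : ℕ) ≠ n) : lastP (p + 1) (extP k j σ) ↔ lastP p σ := by
  simp only [lastP, hp, false_or, Nat.add_eq_zero_iff, one_ne_zero, and_false]
  constructor
  · intro h i hi
    have := h (j.succAbove i) ((succAbove_last_iff j hj i).2 hi)
    rw [extP_symm_succAbove, succAbove_val] at this
    split_ifs at this <;> omega
  · intro h a ha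
    rcases Fin.eq_self_or_eq_succAbove j a with rfl | ⟨a, rfl⟩
    · omega
    · have := h a ((succAbove_last_iff j hj a).1 ha)
      rw [extP_symm_succAbove, succAbove_val]
      split_ifs <;> omega

lemma last_ext2 {n : ℕ} (p : ℕ) (k j : Fin (n + 1)) (σ : Equiv.Perm (Fin n)) (hk : p ≤ (k : ℕ))
    (hj : (j : ℕ) ≠ n) : lastP p (extP k j σ) ↔ lastP p σ := by
  simp only [lastP]
  refine or_congr Iff.rfl ?_
  constructor
  · intro h i hi
    have := h (j.succAbove i) ((succAbove_last_iff j hj i).2 hi)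
    rw [extP_symm_succAbove, succAbove_val] at this
    split_ifs at this <;> omega
  · intro h a ha
    rcases Fin.eq_self_or_eq_succAbove j a with rfl | ⟨a, rfl⟩
    · omega
    · have := h a ((succAbove_last_iff j hj a).1 ha)
      rw [extP_symm_succAbove, succAbove_val]
      split_ifs <;> omega

lemma extP_pos {n : ℕ} (k j : Fin (n + 1)) (σ : Equiv.Perm (Fin n)) (i : Fin n) (a : Fin (n + 1))
    (h : (a : ℕ) = if (i : ℕ) < k then (i : ℕ) else i + 1) :
    extP k j σ a = j.succAbove (σ i) := by
  rw [← extP_succAbove k j σ i]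
  congr 1
  ext
  rw [h, succAbove_val]

lemma last_iff {p q : ℕ} (σ : Equiv.Perm (Fin (p + q))) (h : incP p σ) :
    lastP p σ ↔ ∀ i : Fin (p + q), (i : ℕ) + 1 = p → (σ i : ℕ) + 1 = p + q := by
  constructor
  · rintro (h0 | hl) i hi
    · omega
    · have hlt : p + q - 1 < p + q := by omega
      have h1 := hl ⟨p + q - 1, hlt⟩ (by simp; omega)
      set l : Fin (p + q) := ⟨p + q - 1, hlt⟩ with hldef
      have hlv : (l : ℕ) = p + q - 1 := rfl
      by_cases he : σ.symm l = i
      · rw [← he, Equiv.apply_symm_apply, hlv]; omega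
      · exfalso
        have hne : (σ.symm l : ℕ) ≠ i := fun h => he (Fin.ext h)
        have := h (σ.symm l) i (by rw [Fin.lt_def]; omega) (Or.inl (by omega))
        rw [Equiv.apply_symm_apply, Fin.lt_def] at this
        omega
  · intro hl
    by_cases hp : p = 0
    · exact Or.inl hp
    · right
      intro i hi
      have := hl ⟨p - 1, by omega⟩ (by simp; omega)
      have h2 : σ ⟨p - 1, by omega⟩ = i := by ext; omega
      rw [← h2, Equiv.symm_apply_apply]
      simp; omega

open Classical in
lemma precP_eq {X A : Type*} [Ring A] (op : X → X → X) {N p q : ℕ} (h : p + q = N)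
    (f₁ : (Fin p → X) → A) (f₂ : (Fin q → X) → A) (x : Fin N → X) :
    precP op p q f₁ f₂ (x ∘ Fin.cast h) =
      ∑ σ ∈ Finset.univ.filter (incP (N := N) p), if lastP p σ then
        (Equiv.Perm.sign σ : ℤ) •
          (f₁ (fun k => YV op x (TS p σ) (σ ⟨k, by omega⟩)) *
            f₂ (fun k => x (σ ⟨p + k, by omega⟩))) else 0 := by
  subst h
  have hsh : ShL p q = (Finset.univ.filter (incP (N := p + q) p)).filter (lastP p) := by
    ext σ
    simp only [ShL, Sh, Finset.mem_filter, Finset.mem_univ, true_and]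
    constructor
    · rintro ⟨⟨h1, h2⟩, h3⟩
      have hi : incP p σ := fun i j hij hp => by
        rcases hp with hp | hp
        · exact h1 i j hij hp
        · exact h2 i j hij hp
      exact ⟨hi, (last_iff σ hi).2 h3⟩
    · rintro ⟨hi, h3⟩
      exact ⟨⟨fun i j hij hp => hi i j hij (Or.inl hp), fun i j hij hp => hi i j hij (Or.inr hp)⟩,
        (last_iff σ hi).1 h3⟩
  rw [← Finset.sum_filter, ← hsh]
  unfold precP
  refine Finset.sum_congr rfl fun σ _ => ?_
  congr 2
  congr 1
  funext k
  unfold yVal YV TS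
  rw [Finset.filter_filter]
  rfl

/-- argument of `f₁`, twisted by `j` -/
def argA {X : Type*} (op : X → X → X) (p q : ℕ) (x : Fin (p + q + 1) → X) (j : Fin (p + q + 1))
    (σ : Equiv.Perm (Fin (p + q))) : Fin p → X :=
  fun k => YV op x (insert j (TM p j σ)) (j.succAbove (σ ⟨k, by omega⟩))

/-- argument of `f₁`, untwisted -/
def argB {X : Type*} (op : X → X → X) (p q : ℕ) (x : Fin (p + q + 1) → X) (j : Fin (p + q + 1))
    (σ : Equiv.Perm (Fin (p + q))) : Fin p → X :=
  fun k => YV op x (TM p j σ) (j.succAbove (σ ⟨k, by omega⟩))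

/-- argument of `f₂`, twisted by `j` -/
def argC {X : Type*} (op : X → X → X) (p q : ℕ) (x : Fin (p + q + 1) → X) (j : Fin (p + q + 1))
    (σ : Equiv.Perm (Fin (p + q))) : Fin q → X :=
  fun k => rackFace op false j x (σ ⟨p + k, by omega⟩)

/-- argument of `f₂`, untwisted -/
def argE {X : Type*} (p q : ℕ) (x : Fin (p + q + 1) → X) (j : Fin (p + q + 1))
    (σ : Equiv.Perm (Fin (p + q))) : Fin q → X :=
  fun k => x (j.succAbove (σ ⟨p + k, by omega⟩))

lemma argAB_last {X : Type*} (op : X → X → X) (p q : ℕ) (x : Fin (p + q + 1) → X)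
    (j : Fin (p + q + 1)) (σ : Equiv.Perm (Fin (p + q))) (hj : (j : ℕ) = p + q) :
    argA op p q x j σ = argB op p q x j σ := by
  funext k
  exact YV_insert_ge _ _ _ _ _ (by rw [Fin.le_def]; omega)

lemma argCE_last {X : Type*} (op : X → X → X) (p q : ℕ) (x : Fin (p + q + 1) → X)
    (j : Fin (p + q + 1)) (σ : Equiv.Perm (Fin (p + q))) (hj : (j : ℕ) = p + q) :
    argC op p q x j σ = argE p q x j σ := by
  funext k
  unfold argC argE
  rw [face_false, if_pos (by omega)]

open Classical in
lemma lhs_eq {X A : Type*} [Ring A] (op : X → X → X)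
    (hself : ∀ x y z : X, op x (op y z) = op (op x y) (op x z))
    (p q : ℕ) (f₁ : (Fin p → X) → A) (f₂ : (Fin q → X) → A) (x : Fin (p + q + 1) → X) :
    rackDiff op (precP op p q f₁ f₂) x =
      ∑ j : Fin (p + q + 1), ∑ σ ∈ Finset.univ.filter (incP (N := p + q) p), if lastP p σ then
        ((-1 : ℤ) ^ ((j : ℕ) + 1) * Equiv.Perm.sign σ) •
          (f₁ (argA op p q x j σ) * f₂ (argC op p q x j σ)
            - f₁ (argB op p q x j σ) * f₂ (argE p q x j σ)) else 0 := by
  unfold rackDiff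
  refine Finset.sum_congr rfl fun j _ => ?_
  have h0 := precP_eq op (rfl : p + q = p + q) f₁ f₂ (rackFace op false j x)
  have h1 := precP_eq op (rfl : p + q = p + q) f₁ f₂ (rackFace op true j x)
  have hc : ∀ y : Fin (p + q) → X, y ∘ Fin.cast (rfl : p + q = p + q) = y := fun y => rfl
  rw [hc] at h0 h1
  rw [h0, h1, ← Finset.sum_sub_distrib, Finset.smul_sum]
  refine Finset.sum_congr rfl fun σ _ => ?_
  have ea : (fun k : Fin p => YV op (rackFace op false j x) (TS p σ) (σ ⟨k, by omega⟩)) =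
      argA op p q x j σ := by
    funext k; rw [YV_face op hself]; rfl
  have eb : (fun k : Fin p => YV op (rackFace op true j x) (TS p σ) (σ ⟨k, by omega⟩)) =
      argB op p q x j σ := by
    funext k; rw [face_true]
    exact YV_comp op x (Fin.succAboveOrderEmb j) (TS p σ) _
  have ee : (fun k : Fin q => rackFace op true j x (σ ⟨p + k, by omega⟩)) =
      argE p q x j σ := by
    funext k; rw [face_true]; rfl
  rw [ea, eb, ee]
  by_cases h : lastP p σ
  · simp only [h, if_true, ← smul_sub, smul_smul]
    rfl
  · simp [h]

open Classical in
lemma rhs1_eq {X A : Type*} [Ring A] (op : X → X → X)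
    (hself : ∀ x y z : X, op x (op y z) = op (op x y) (op x z))
    (p q : ℕ) (f₁ : (Fin p → X) → A) (f₂ : (Fin q → X) → A) (x : Fin (p + q + 1) → X)
    (hN : p + 1 + q = p + q + 1) :
    precP op (p + 1) q (rackDiff op f₁) f₂ (x ∘ Fin.cast hN) =
      ∑ j : Fin (p + q + 1), ∑ σ ∈ Finset.univ.filter (incP (N := p + q) p), if lastP p σ then
        ((-1 : ℤ) ^ ((j : ℕ) + 1) * Equiv.Perm.sign σ) •
          ((f₁ (argA op p q x j σ) - f₁ (argB op p q x j σ)) * f₂ (argE p q x j σ)) else 0 := by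
  rw [precP_eq]
  rw [← reindexP (n := p + q) (m := p + 1) (lo := 0) (hi := p) (by omega) (by omega) (by omega)
    (fun i => ⟨i, by omega⟩) (fun i => by simp) (incP (p + 1)) (incP p)
    (fun k j σ _ hk => incP_ext1 k j σ hk)
    (fun σ h a b hab _ hb => h a b hab (Or.inl hb))
    (fun τ i => if lastP (p + 1) τ then
      ((Equiv.Perm.sign τ : ℤ) * (-1) ^ ((i : ℕ) + 1)) •
        ((f₁ (rackFace op false i (fun k => YV op x (TS (p + 1) τ) (τ ⟨k, by omega⟩)))
          - f₁ (rackFace op true i (fun k => YV op x (TS (p + 1) τ) (τ ⟨k, by omega⟩)))) *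
          f₂ (fun k => x (τ ⟨p + 1 + k, by omega⟩))) else 0)]
  · refine Finset.sum_congr rfl fun τ _ => ?_
    by_cases h : lastP (p + 1) τ
    · simp only [h, if_true]
      unfold rackDiff
      rw [Finset.sum_mul, Finset.smul_sum]
      refine Finset.sum_congr rfl fun i _ => ?_
      rw [smul_mul_assoc, smul_smul]
    · simp [h]
  · intro i j σ hσ hcut
    have hi : (i : ℕ) ≤ p := by omega
    set k : Fin (p + q + 1) := ⟨i, by omega⟩ with hk
    have hkv : (k : ℕ) = i := rfl
    rw [TS_ext1 p k j σ hi]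
    have ea : rackFace op false i
        (fun m : Fin (p + 1) => YV op x (TM p j σ) (extP k j σ ⟨m, by omega⟩)) =
        argA op p q x j σ := by
      funext m
      rw [face_false]
      have e1 : extP k j σ ⟨i.succAbove m, by omega⟩ = j.succAbove (σ ⟨m, by omega⟩) :=
        extP_pos _ _ _ _ _ (by simp only [succAbove_val]; rfl)
      have e2 : extP k j σ ⟨i, by omega⟩ = j := extP_self k j σ
      rw [e1, e2]
      have hc := hcut ⟨m, by omega⟩ (Nat.zero_le _) m.2
      unfold argA
      split_ifs with h
      · rw [YV_insert_ge]
        have := hc.1 h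
        rw [Fin.le_def, succAbove_val, if_pos this]
        exact this.le
      · rw [YV_insert_lt op hself _ _ _ _ _ (not_mem_TM _ _ _)]
        have := mt hc.2 h
        rw [Fin.lt_def, succAbove_val, if_neg this]
        omega
    have eb : rackFace op true i
        (fun m : Fin (p + 1) => YV op x (TM p j σ) (extP k j σ ⟨m, by omega⟩)) =
        argB op p q x j σ := by
      rw [face_true]
      funext m
      have e1 : extP k j σ ⟨i.succAbove m, by omega⟩ = j.succAbove (σ ⟨m, by omega⟩) :=
        extP_pos _ _ _ _ _ (by simp only [succAbove_val]; rfl)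
      rw [e1]; rfl
    have ee : (fun m : Fin q => x (extP k j σ ⟨p + 1 + m, by omega⟩)) = argE p q x j σ := by
      funext m
      rw [extP_pos k j σ ⟨p + m, by omega⟩ _ (by
        rw [if_neg (by simp only [hkv]; omega)]; simp only; omega)]
      rfl
    rw [ea, eb, ee]
    by_cases hp : p = 0
    · have : argA op p q x j σ = argB op p q x j σ := by
        funext m; exact absurd m.2 (by omega)
      rw [this]; simp
    by_cases hj : (j : ℕ) = p + q
    · rw [argAB_last op p q x j σ hj]; simp
    rw [last_ext1 p k j σ hi hp hj, extP_sign, hkv]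
    congr 2
    have : (-1 : ℤ) ^ (i : ℕ) * (-1) ^ (i : ℕ) = 1 := by
      rw [← mul_pow]; simp
    rw [pow_add, pow_add, pow_add]
    linear_combination (-1 : ℤ) ^ (j : ℕ) * Equiv.Perm.sign σ * (-1) * this

open Classical in
lemma rhs2_eq {X A : Type*} [Ring A] (op : X → X → X)
    (p q : ℕ) (f₁ : (Fin p → X) → A) (f₂ : (Fin q → X) → A) (x : Fin (p + q + 1) → X)
    (hN : p + (q + 1) = p + q + 1) :
    (-1 : ℤ) ^ p • precP op p (q + 1) f₁ (rackDiff op f₂) (x ∘ Fin.cast hN) =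
      ∑ j : Fin (p + q + 1), ∑ σ ∈ Finset.univ.filter (incP (N := p + q) p), if lastP p σ then
        ((-1 : ℤ) ^ ((j : ℕ) + 1) * Equiv.Perm.sign σ) •
          (f₁ (argA op p q x j σ) * (f₂ (argC op p q x j σ) - f₂ (argE p q x j σ))) else 0 := by
  rw [precP_eq]
  rw [← reindexP (n := p + q) (m := q + 1) (lo := p) (hi := p + q) (by omega) (by omega) (by omega)
    (fun i => ⟨p + i, by omega⟩) (fun i => by simp) (incP p) (incP p)
    (fun k j σ hk _ => incP_ext2 k j σ hk)
    (fun σ h a b hab ha _ => h a b hab (Or.inr ha))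
    (fun τ i => if lastP p τ then
      ((-1) ^ p * ((Equiv.Perm.sign τ : ℤ) * (-1) ^ ((i : ℕ) + 1))) •
        (f₁ (fun k => YV op x (TS p τ) (τ ⟨k, by omega⟩)) *
          (f₂ (rackFace op false i (fun k => x (τ ⟨p + k, by omega⟩))) -
            f₂ (rackFace op true i (fun k => x (τ ⟨p + k, by omega⟩))))) else 0)]
  · rw [Finset.smul_sum]
    refine Finset.sum_congr rfl fun τ _ => ?_
    by_cases h : lastP p τ
    · simp only [h, if_true]
      unfold rackDiff
      rw [Finset.mul_sum, Finset.smul_sum, Finset.smul_sum]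
      refine Finset.sum_congr rfl fun i _ => ?_
      rw [mul_smul_comm, smul_smul, smul_smul, mul_assoc]
    · simp [h]
  · intro i j σ hσ hcut
    set k : Fin (p + q + 1) := ⟨p + i, by omega⟩ with hk
    have hkv : (k : ℕ) = p + i := rfl
    have hi : p ≤ (k : ℕ) := by omega
    rw [TS_ext2 p k j σ hi]
    have ea : (fun m : Fin p => YV op x (insert j (TM p j σ)) (extP k j σ ⟨m, by omega⟩)) =
        argA op p q x j σ := by
      funext m
      rw [extP_pos k j σ ⟨m, by omega⟩ _ (by
        rw [if_pos (by simp only [hkv]; omega)])]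
      rfl
    have e1 : ∀ m : Fin q, extP k j σ ⟨p + i.succAbove m, by omega⟩ =
        j.succAbove (σ ⟨p + m, by omega⟩) := fun m =>
      extP_pos _ _ _ _ _ (by
        simp only [succAbove_val, hkv]
        split_ifs <;> omega)
    have ec : rackFace op false i (fun m : Fin (q + 1) => x (extP k j σ ⟨p + m, by omega⟩)) =
        argC op p q x j σ := by
      funext m
      unfold argC
      rw [face_false, face_false, e1]
      have e2 : extP k j σ ⟨p + i, by omega⟩ = j := extP_self k j σ
      rw [e2]
      have hc := hcut ⟨p + m, by omega⟩ (by simp) (by simp)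
      have : (m : ℕ) < i ↔ (σ ⟨p + m, by omega⟩ : ℕ) < j := by
        rw [← hc, hkv]; simp
      simp only [this]
    have ee : rackFace op true i (fun m : Fin (q + 1) => x (extP k j σ ⟨p + m, by omega⟩)) =
        argE p q x j σ := by
      rw [face_true]
      funext m
      rw [e1]; rfl
    rw [ea, ec, ee]
    by_cases hj : (j : ℕ) = p + q
    · rw [argCE_last op p q x j σ hj]; simp
    rw [last_ext2 p k j σ hi hj, extP_sign, hkv]
    congr 2
    have h1 : (-1 : ℤ) ^ (i : ℕ) * (-1) ^ (i : ℕ) = 1 := by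
      rw [← mul_pow]; simp
    have h2 : (-1 : ℤ) ^ p * (-1) ^ p = 1 := by
      rw [← mul_pow]; simp
    rw [pow_add, pow_add, pow_add, pow_add]
    have h3 : ((-1 : ℤ) ^ (i : ℕ) * (-1) ^ (i : ℕ)) * ((-1 : ℤ) ^ p * (-1) ^ p) = 1 := by
      rw [h1, h2, one_mul]
    linear_combination (-1 : ℤ) ^ (j : ℕ) * Equiv.Perm.sign σ * (-1) * h3

/-- For a rack `(X, ▷)` and an associative ring `A` (trivial coefficients),
the rack differential is a derivation for `≺`:
`d_R(f₁ ≺ f₂) = (d_R f₁) ≺ f₂ + (−1)^{p₁} f₁ ≺ (d_R f₂)`. -/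
theorem statement4 {X A : Type*} [Ring A] (op : X → X → X)
    (hself : ∀ x y z : X, op x (op y z) = op (op x y) (op x z))
    (hbij : ∀ x : X, Function.Bijective (op x))
    (p₁ p₂ : ℕ) (f₁ : (Fin p₁ → X) → A) (f₂ : (Fin p₂ → X) → A)
    (x : Fin (p₁ + p₂ + 1) → X) :
    rackDiff op (precP op p₁ p₂ f₁ f₂) x =
      precP op (p₁ + 1) p₂ (rackDiff op f₁) f₂
        (x ∘ Fin.cast (show p₁ + 1 + p₂ = p₁ + p₂ + 1 by omega)) +
      ((-1 : ℤ) ^ p₁) •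
        precP op p₁ (p₂ + 1) f₁ (rackDiff op f₂)
          (x ∘ Fin.cast (show p₁ + (p₂ + 1) = p₁ + p₂ + 1 by omega)) := by

  rw [lhs_eq op hself, rhs1_eq op hself, rhs2_eq op, ← Finset.sum_add_distrib]
  refine Finset.sum_congr rfl fun j _ => ?_
  rw [← Finset.sum_add_distrib]
  refine Finset.sum_congr rfl fun σ _ => ?_
  split_ifs
  · rw [← smul_add]
    congr 1
    noncomm_ring
  · simp
end

section
/- Let X be a rack and A an abelian group, regarded as a trivial X-module. The rack differential squares to zero: for all n ≥ 0 and all f : X^n → A, d_R^{n+2}(d_R^{n+1} f) = 0. -/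
theorem rackFace_comm {X : Type*} (op : X → X → X)
    (hself : ∀ x y z : X, op x (op y z) = op (op x y) (op x z)) (ε δ : Bool) {n : ℕ}
    (i j : ℕ) (hij : i ≤ j) (hj : j < n + 1) (x : Fin (n + 2) → X) :
    rackFace op ε (⟨i, by omega⟩ : Fin (n + 1)) (rackFace op δ (⟨j + 1, by omega⟩ : Fin (n + 2)) x)
      = rackFace op δ (⟨j, hj⟩ : Fin (n + 1)) (rackFace op ε (⟨i, by omega⟩ : Fin (n + 2)) x) := by
  funext k
  obtain ⟨k, hk⟩ := k
  have e : i < j + 1 := by omega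
  have e' : ¬ j < i := by omega
  simp only [rackFace, Fin.castSucc_mk, Fin.succ_mk, e, e', if_true, if_false]
  by_cases h1 : k < i
  · have h2 : k < j := by omega
    have h3 : k < j + 1 := by omega
    simp [h1, h2, h3]
  · by_cases h2 : k < j
    · have h3 : k < j + 1 := by omega
      simp [h1, h2]
    · have h3 : ¬ k + 1 < i := by omega
      have h4 : ¬ k < j := by omega
      cases ε <;> cases δ <;> simp [h1, h2, h3, hself (x ⟨i, by omega⟩)]

/-- For a rack `(X, ▷)` and an abelian group `A` (trivial coefficients),
the rack differential squares to zero. -/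
theorem statement6 {X A : Type*} [AddCommGroup A] (op : X → X → X)
    (hself : ∀ x y z : X, op x (op y z) = op (op x y) (op x z))
    (hbij : ∀ x : X, Function.Bijective (op x))
    (n : ℕ) (f : (Fin n → X) → A) :
    rackDiff op (rackDiff op f) = 0 := by
  funext x
  have key : ∀ (i j : ℕ) (hij : i ≤ j) (hj : j < n + 1) (ε δ : Bool), _ :=
    fun i j hij hj ε δ => rackFace_comm op hself ε δ i j hij hj x
  let g : Fin (n + 2) × Fin (n + 1) → A := fun p =>
    ((-1 : ℤ) ^ ((p.1 : ℕ) + 1) * (-1 : ℤ) ^ ((p.2 : ℕ) + 1)) •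
      ((f (rackFace op false p.2 (rackFace op false p.1 x))
        - f (rackFace op true p.2 (rackFace op false p.1 x)))
      - (f (rackFace op false p.2 (rackFace op true p.1 x))
        - f (rackFace op true p.2 (rackFace op true p.1 x))))
  have hg : rackDiff op (rackDiff op f) x = ∑ p, g p := by
    rw [Fintype.sum_prod_type]
    simp only [rackDiff, g]
    refine Finset.sum_congr rfl fun j _ => ?_
    rw [← Finset.sum_sub_distrib, Finset.smul_sum]
    refine Finset.sum_congr rfl fun i _ => ?_
    rw [← smul_sub, smul_smul]
  have hcancel : ∀ (i j : ℕ) (hij : i ≤ j) (hj : j < n + 1),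
      g (⟨j + 1, by omega⟩, ⟨i, by omega⟩) + g (⟨i, by omega⟩, ⟨j, hj⟩) = 0 := by
    intro i j hij hj
    simp only [g, key i j hij hj]
    rw [show (-1 : ℤ) ^ (j + 1 + 1) * (-1) ^ (i + 1) = -((-1) ^ (i + 1) * (-1) ^ (j + 1)) by ring,
      neg_smul, neg_add_eq_sub, ← smul_sub]
    convert smul_zero _ using 2
    abel
  rw [hg]
  refine Finset.sum_involution
    (fun p _ => if h : (p.2 : ℕ) < p.1 then
      ((⟨p.2, by omega⟩ : Fin (n + 2)), (⟨p.1 - 1, by omega⟩ : Fin (n + 1)))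
      else ((⟨p.2 + 1, by omega⟩ : Fin (n + 2)), (⟨p.1, by omega⟩ : Fin (n + 1))))
    ?_ ?_ (fun _ _ => Finset.mem_univ _) ?_
  · rintro ⟨⟨j, hj⟩, ⟨i, hi⟩⟩ _
    by_cases h : i < j
    · obtain ⟨j, rfl⟩ : ∃ m, j = m + 1 := ⟨j - 1, by omega⟩
      simpa [h] using hcancel i j (by omega) (by omega)
    · simp only [h, dite_false]
      rw [add_comm]
      exact hcancel j i (by omega) (by omega)
  · rintro ⟨⟨j, hj⟩, ⟨i, hi⟩⟩ _ _
    by_cases h : i < j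
    · simp [h]; omega
    · simp [h]; omega
  · rintro ⟨⟨j, hj⟩, ⟨i, hi⟩⟩ _
    by_cases h : i < j
    · have h' : ¬ j - 1 < i := by omega
      simp [h, h']; omega
    · have h' : j < i + 1 := by omega
      simp [h, h']
end
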